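/- Let m ∈ ℂ and let k ∈ ℂ with Re(k) > 0. Then the function u(r) := 𝓘_m(k r) on ]0,∞[ is twice differentiable and satisfies the Bessel eigenvalue equation −u''(r) + (m² − 1/4)·r^{−2}·u(r) + k²·u(r) = 0 for all r > 0; i.e., 𝓘_m(k·) is an eigenfunction of the Bessel operator −∂_r² + (m² − 1/4)/r² with eigenvalue −k². -/

import Mathlib

open Complex

/-- Olver-normalized hypergeometric function `₀𝐅₁(c; w) = ∑ wⁿ/(n! Γ(c+n))`. -/
noncomputable def zeroF1reg (c w : ℂ) : ℂ :=
  ∑' n : ℕ, w ^ n / ((n.factorial : ℂ) * Complex.Gamma (c + n))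

/-- Hyperbolic 1d Bessel function `𝓘_m(z) = √π (z/2)^{1/2+m} ₀𝐅₁(m+1; z²/4)`
(principal branch powers). -/
noncomputable def besselI1d (m z : ℂ) : ℂ :=
  (Real.sqrt Real.pi : ℂ) * (z / 2) ^ ((1 : ℂ) / 2 + m) * zeroF1reg (m + 1) (z ^ 2 / 4)

/-! The span of the functions `Y a c z = z ^ a * ₀𝐅₁(c; κ z² / 4)` is closed under
differentiation: `Y a c` has derivative `a * Y (a - 1) c + κ / 2 * Y (a + 1) (c + 1)`, because
`₀𝐅₁(c; ·)` has derivative `₀𝐅₁(c + 1; ·)`. When `c = a + 1 / 2`, the terms of the second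
derivative other than `a * (a - 1) * Y (a - 2) c` add up to `κ * Y a c` by the contiguity relation
`₀𝐅₁(c; w) = c * ₀𝐅₁(c + 1; w) + w * ₀𝐅₁(c + 2; w)`. Taking `a = 1 / 2 + m` and `κ = k²` gives
the equation for `𝓘_m(k r)`, which is a constant multiple of `Y a (m + 1) r` for `r > 0`. -/

open Filter

/-- The `n`-th term `wⁿ / (n! Γ(c + n))` of the series defining `zeroF1reg c w`; since
`x / 0 = 0`, it vanishes when `c + n` is a pole of `Γ`, in agreement with `1 / Γ = 0` there. -/
noncomputable def zeroF1regTerm (c w : ℂ) (n : ℕ) : ℂ :=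
  w ^ n / ((n.factorial : ℂ) * Gamma (c + n))

lemma zeroF1regTerm_eq_add_natCast_mul (c w : ℂ) (n : ℕ) :
    zeroF1regTerm c w n = (c + n) * zeroF1regTerm (c + 1) w n := by
  have h := one_div_Gamma_eq_self_mul_one_div_Gamma_add_one (c + n)
  rw [add_right_comm] at h
  simp only [zeroF1regTerm, div_eq_mul_inv, mul_inv]
  rw [h]
  ring

lemma succ_mul_zeroF1regTerm_succ (c w : ℂ) (n : ℕ) :
    (n + 1) * zeroF1regTerm c w (n + 1) = w * zeroF1regTerm (c + 1) w n := by
  have hn : (n : ℂ) + 1 ≠ 0 := n.cast_add_one_ne_zero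
  simp only [zeroF1regTerm, Nat.factorial_succ, Nat.cast_mul, Nat.cast_add_one, pow_succ,
    add_assoc, add_comm (1 : ℂ)]
  field_simp

lemma norm_zeroF1regTerm_le {c w z : ℂ} (h : ‖w‖ ≤ ‖z‖) (n : ℕ) :
    ‖zeroF1regTerm c w n‖ ≤ ‖zeroF1regTerm c z n‖ := by
  simp only [zeroF1regTerm, norm_div, norm_pow]
  gcongr

lemma summable_zeroF1regTerm (c w : ℂ) : Summable (zeroF1regTerm c w) := by
  have hc : Tendsto (fun n : ℕ => ‖c + n‖) atTop atTop :=
    tendsto_norm_cobounded_atTop.comp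
      ((tendsto_const_add_cobounded c).comp tendsto_natCast_atTop_cobounded)
  have hn : ∀ᶠ n : ℕ in atTop, 2 * ‖w‖ ≤ n := tendsto_natCast_atTop_atTop.eventually_ge_atTop _
  refine summable_of_ratio_norm_eventually_le (r := 1 / 2) (by norm_num) ?_
  filter_upwards [hc.eventually_ge_atTop 1, hn] with n hcn hwn
  have hlower : ‖zeroF1regTerm (c + 1) w n‖ ≤ ‖zeroF1regTerm c w n‖ := by
    rw [zeroF1regTerm_eq_add_natCast_mul c, norm_mul]
    exact le_mul_of_one_le_left (norm_nonneg _) hcn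
  have hsucc : (n + 1) * ‖zeroF1regTerm c w (n + 1)‖ = ‖w‖ * ‖zeroF1regTerm (c + 1) w n‖ := by
    simpa only [norm_mul, ← Nat.cast_add_one, norm_natCast] using
      congrArg norm (succ_mul_zeroF1regTerm_succ c w n)
  have hpos : (0 : ℝ) < n + 1 := n.cast_add_one_pos
  refine le_of_mul_le_mul_left ?_ hpos
  calc (n + 1) * ‖zeroF1regTerm c w (n + 1)‖
      = ‖w‖ * ‖zeroF1regTerm (c + 1) w n‖ := hsucc
    _ ≤ (n + 1) / 2 * ‖zeroF1regTerm c w n‖ := by gcongr; linarith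
    _ = (n + 1) * (1 / 2 * ‖zeroF1regTerm c w n‖) := by ring

lemma hasSum_zeroF1regTerm (c w : ℂ) : HasSum (zeroF1regTerm c w) (zeroF1reg c w) :=
  (summable_zeroF1regTerm c w).hasSum

lemma hasDerivAt_zeroF1regTerm_zero (c w : ℂ) :
    HasDerivAt (fun z => zeroF1regTerm c z 0) 0 w := by
  simpa [zeroF1regTerm] using hasDerivAt_const w (Gamma c)⁻¹

lemma hasDerivAt_zeroF1regTerm_succ (c w : ℂ) (n : ℕ) :
    HasDerivAt (fun z => zeroF1regTerm c z (n + 1)) (zeroF1regTerm (c + 1) w n) w := by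
  have hn : (n : ℂ) + 1 ≠ 0 := n.cast_add_one_ne_zero
  refine ((hasDerivAt_pow (n + 1) w).div_const _).congr_deriv ?_
  simp only [zeroF1regTerm, Nat.factorial_succ, Nat.cast_mul, Nat.cast_add_one,
    add_tsub_cancel_right, add_assoc, add_comm (1 : ℂ)]
  field_simp

lemma differentiable_zeroF1regTerm (c : ℂ) : ∀ n, Differentiable ℂ fun z => zeroF1regTerm c z n
  | 0 => fun w => (hasDerivAt_zeroF1regTerm_zero c w).differentiableAt
  | n + 1 => fun w => (hasDerivAt_zeroF1regTerm_succ c w n).differentiableAt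

lemma hasDerivAt_zeroF1reg (c w : ℂ) : HasDerivAt (zeroF1reg c) (zeroF1reg (c + 1) w) w := by
  obtain ⟨R, hR⟩ : ∃ R : ℝ, ‖w‖ < R := exists_gt _
  have hw : w ∈ Metric.ball (0 : ℂ) R := mem_ball_zero_iff.mpr hR
  have hbound : ∀ n, ∀ z ∈ Metric.ball (0 : ℂ) R,
      ‖zeroF1regTerm c z n‖ ≤ ‖zeroF1regTerm c R n‖ := fun n z hz => by
    refine norm_zeroF1regTerm_le ?_ n
    rw [norm_real]
    exact (mem_ball_zero_iff.mp hz).le.trans (Real.le_norm_self R)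
  have hsum := (summable_zeroF1regTerm c R).norm
  have hdiff : ∀ n, DifferentiableOn ℂ (fun z => zeroF1regTerm c z n) (Metric.ball 0 R) :=
    fun n => (differentiable_zeroF1regTerm c n).differentiableOn
  have hderiv : HasSum (fun n => deriv (fun z => zeroF1regTerm c z n) w)
      (deriv (zeroF1reg c) w) :=
    hasSum_deriv_of_summable_norm hsum hdiff Metric.isOpen_ball hbound hw
  have hshift : HasSum (fun n => deriv (fun z => zeroF1regTerm c z n) w)
      (zeroF1reg (c + 1) w) := by
    rw [← hasSum_nat_add_iff' 1]
    simpa [(hasDerivAt_zeroF1regTerm_zero c w).deriv, (hasDerivAt_zeroF1regTerm_succ c w _).deriv]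
      using hasSum_zeroF1regTerm (c + 1) w
  rw [hshift.unique hderiv]
  have hdiffOn : DifferentiableOn ℂ (zeroF1reg c) (Metric.ball 0 R) :=
    differentiableOn_tsum_of_summable_norm hsum hdiff Metric.isOpen_ball hbound
  exact (hdiffOn.differentiableAt (Metric.isOpen_ball.mem_nhds hw)).hasDerivAt

lemma hasSum_natCast_mul_zeroF1regTerm (c w : ℂ) :
    HasSum (fun n : ℕ => n * zeroF1regTerm c w n) (w * zeroF1reg (c + 1) w) := by
  rw [← hasSum_nat_add_iff' 1]
  simpa [succ_mul_zeroF1regTerm_succ] using (hasSum_zeroF1regTerm (c + 1) w).mul_left w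

lemma zeroF1reg_contiguous (c w : ℂ) :
    zeroF1reg c w = c * zeroF1reg (c + 1) w + w * zeroF1reg (c + 2) w := by
  have h := ((hasSum_zeroF1regTerm (c + 1) w).mul_left c).add
    (hasSum_natCast_mul_zeroF1regTerm (c + 1) w)
  simp only [← add_mul, ← zeroF1regTerm_eq_add_natCast_mul, add_assoc, one_add_one_eq_two] at h
  exact (hasSum_zeroF1regTerm c w).unique h

/-- The function `z ^ a * ₀𝐅₁(c; κ z² / 4)` of `z`. For `r > 0` and up to a constant factor,
`𝓘_m(k r)` is the case `a = 1 / 2 + m`, `c = m + 1`, `κ = k²`, `z = r`; the parameters `a` and `c`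
are independent so that the linear span of the family is closed under differentiation. -/
noncomputable def cpowMulZeroF1reg (κ a c z : ℂ) : ℂ :=
  z ^ a * zeroF1reg c (κ * z ^ 2 / 4)

/-- The derivative of `cpowMulZeroF1reg κ a c` on the slit plane, given by an explicit formula so
that it can be differentiated again. -/
noncomputable def derivCpowMulZeroF1reg (κ a c z : ℂ) : ℂ :=
  a * cpowMulZeroF1reg κ (a - 1) c z + κ / 2 * cpowMulZeroF1reg κ (a + 1) (c + 1) z

lemma hasDerivAt_cpowMulZeroF1reg (κ a c : ℂ) {z : ℂ} (hz : z ∈ slitPlane) :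
    HasDerivAt (cpowMulZeroF1reg κ a c) (derivCpowMulZeroF1reg κ a c z) z := by
  have hpow : HasDerivAt (fun z : ℂ => z ^ a) (a * z ^ (a - 1)) z :=
    (hasStrictDerivAt_cpow_const hz).hasDerivAt
  have harg : HasDerivAt (fun z : ℂ => κ * z ^ 2 / 4) (κ / 2 * z) z :=
    (((hasDerivAt_pow 2 z).const_mul κ).div_const 4).congr_deriv (by push_cast; ring)
  refine (hpow.mul ((hasDerivAt_zeroF1reg c _).comp z harg)).congr_deriv ?_
  simp only [derivCpowMulZeroF1reg, cpowMulZeroF1reg, cpow_add _ _ (slitPlane_ne_zero hz),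
    cpow_one, Function.comp_apply]
  ring

lemma cpowMulZeroF1reg_contiguous (κ a c : ℂ) {z : ℂ} (hz : z ≠ 0) :
    cpowMulZeroF1reg κ a c z =
      c * cpowMulZeroF1reg κ a (c + 1) z + κ / 4 * cpowMulZeroF1reg κ (a + 2) (c + 2) z := by
  simp only [cpowMulZeroF1reg, cpow_add _ _ hz, cpow_ofNat]
  rw [zeroF1reg_contiguous c]
  ring

lemma cpowMulZeroF1reg_sub_two (κ a c : ℂ) {z : ℂ} (hz : z ≠ 0) :
    cpowMulZeroF1reg κ (a - 2) c z = cpowMulZeroF1reg κ a c z / z ^ 2 := by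
  simp only [cpowMulZeroF1reg, cpow_sub _ _ hz, cpow_ofNat, div_mul_eq_mul_div]

lemma hasDerivAt_derivCpowMulZeroF1reg (κ a c : ℂ) {z : ℂ} (hz : z ∈ slitPlane) :
    HasDerivAt (derivCpowMulZeroF1reg κ a c)
      (a * (a - 1) * cpowMulZeroF1reg κ (a - 2) c z +
        κ * ((a + 1 / 2) * cpowMulZeroF1reg κ a (c + 1) z +
          κ / 4 * cpowMulZeroF1reg κ (a + 2) (c + 2) z)) z := by
  refine (((hasDerivAt_cpowMulZeroF1reg κ (a - 1) c hz).const_mul a).add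
    ((hasDerivAt_cpowMulZeroF1reg κ (a + 1) (c + 1) hz).const_mul (κ / 2))).congr_deriv ?_
  simp only [derivCpowMulZeroF1reg, sub_sub, sub_add_cancel, add_sub_cancel_right, add_assoc,
    one_add_one_eq_two]
  ring

lemma hasDerivAt_derivCpowMulZeroF1reg_bessel (κ m : ℂ) {z : ℂ} (hz : z ∈ slitPlane) :
    HasDerivAt (derivCpowMulZeroF1reg κ (1 / 2 + m) (m + 1))
      (((m ^ 2 - 1 / 4) / z ^ 2 + κ) * cpowMulZeroF1reg κ (1 / 2 + m) (m + 1) z) z := by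
  have hz0 := slitPlane_ne_zero hz
  refine (hasDerivAt_derivCpowMulZeroF1reg κ (1 / 2 + m) (m + 1) hz).congr_deriv ?_
  rw [show 1 / 2 + m + 1 / 2 = m + 1 by ring, ← cpowMulZeroF1reg_contiguous κ _ _ hz0,
    cpowMulZeroF1reg_sub_two κ _ _ hz0]
  ring

/- Multiplication by `r > 0` preserves the argument, so the power splits even when `z` lies on the
branch cut. -/
lemma mul_ofReal_cpow {z : ℂ} (hz : z ≠ 0) {r : ℝ} (hr : 0 < r) (a : ℂ) :
    (z * r) ^ a = z ^ a * (r : ℂ) ^ a := by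
  have hr0 : (r : ℂ) ≠ 0 := ofReal_ne_zero.mpr hr.ne'
  rw [cpow_def_of_ne_zero (mul_ne_zero hz hr0), cpow_def_of_ne_zero hz, cpow_def_of_ne_zero hr0,
    log_mul_ofReal r hr z hz, ofReal_log hr.le, ← exp_add]
  ring_nf

lemma besselI1d_mul_ofReal (m : ℂ) {k : ℂ} (hk : k ≠ 0) {r : ℝ} (hr : 0 < r) :
    besselI1d m (k * r) =
      Real.sqrt Real.pi * (k / 2) ^ (1 / 2 + m) *
        cpowMulZeroF1reg (k ^ 2) (1 / 2 + m) (m + 1) r := by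
  rw [besselI1d, cpowMulZeroF1reg, mul_div_right_comm, mul_ofReal_cpow (by simpa using hk) hr,
    mul_pow]
  ring

theorem besselI1d_is_bessel_eigenfunction_general (m k : ℂ) (hk : k ≠ 0) :
    ∀ r : ℝ, 0 < r →
      (DifferentiableAt ℝ (fun r : ℝ => besselI1d m (k * r)) r ∧
        DifferentiableAt ℝ (deriv fun r : ℝ => besselI1d m (k * r)) r) ∧
      -deriv (deriv fun r : ℝ => besselI1d m (k * r)) r +
          (m ^ 2 - 1 / 4) / (r : ℂ) ^ 2 * besselI1d m (k * r) +
          k ^ 2 * besselI1d m (k * r) = 0 := by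
  intro r hr
  let C : ℂ := Real.sqrt Real.pi * (k / 2) ^ (1 / 2 + m)
  have hu : ∀ s : ℝ, 0 < s → HasDerivAt (fun r : ℝ => besselI1d m (k * r))
      (C * derivCpowMulZeroF1reg (k ^ 2) (1 / 2 + m) (m + 1) s) s := fun s hs => by
    refine ((hasDerivAt_cpowMulZeroF1reg _ _ _
      (ofReal_mem_slitPlane.mpr hs)).comp_ofReal.const_mul C).congr_of_eventuallyEq ?_
    filter_upwards [lt_mem_nhds hs] with t ht using besselI1d_mul_ofReal m hk ht
  have hu' : HasDerivAt (deriv fun r : ℝ => besselI1d m (k * r))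
      (C * (((m ^ 2 - 1 / 4) / (r : ℂ) ^ 2 + k ^ 2) *
        cpowMulZeroF1reg (k ^ 2) (1 / 2 + m) (m + 1) r)) r := by
    refine ((hasDerivAt_derivCpowMulZeroF1reg_bessel (k ^ 2) m
      (ofReal_mem_slitPlane.mpr hr)).comp_ofReal.const_mul C).congr_of_eventuallyEq ?_
    filter_upwards [lt_mem_nhds hr] with s hs using (hu s hs).deriv
  refine ⟨⟨(hu r hr).differentiableAt, hu'.differentiableAt⟩, ?_⟩
  rw [hu'.deriv, besselI1d_mul_ofReal m hk hr]
  ring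

/-- for `m ∈ ℂ` and `Re k > 0`, the function `u(r) = 𝓘_m(k r)` on `]0,∞[`
is twice differentiable and satisfies `-u'' + (m² - 1/4) r⁻² u + k² u = 0`, i.e. it is an
eigenfunction of the Bessel operator with eigenvalue `-k²`. -/
theorem besselI1d_is_bessel_eigenfunction (m k : ℂ) (hk : 0 < k.re) :
    ∀ r : ℝ, 0 < r →
      (DifferentiableAt ℝ (fun r : ℝ => besselI1d m (k * r)) r ∧
        DifferentiableAt ℝ (deriv fun r : ℝ => besselI1d m (k * r)) r) ∧
      -deriv (deriv fun r : ℝ => besselI1d m (k * r)) r +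
          (m ^ 2 - 1 / 4) / (r : ℂ) ^ 2 * besselI1d m (k * r) +
          k ^ 2 * besselI1d m (k * r) = 0 :=
  besselI1d_is_bessel_eigenfunction_general m k (ne_zero_of_re_pos hk)
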